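/- arXiv:1310.4035 — 5 statements merged into one kernel-verified Lean document; each statement's English description precedes it below -/
import Mathlib

section
/- Let K be a compact Hausdorff space such that C_p(K), the space C(K) of real-valued continuous functions on K equipped with the topology of pointwise convergence, is Lindelöf. Then K has the Bishop property (B). -/
open Set Topology Filter

/-- `f ≺ g`: `f ≠ g` and `f` agrees with `g` on the support of `f` (the closure of
the set where `f` is nonzero). -/
def Prec {K : Type*} [TopologicalSpace K] (f g : C(K, ℝ)) : Prop :=
  f ≠ g ∧ ∀ t ∈ closure {t | f t ≠ 0}, f t = g t

/-- `f ≺_δ g`: `f ≺ g` and `‖f - g‖ ≥ δ`. -/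
def PrecDelta {K : Type*} [TopologicalSpace K] [CompactSpace K] (δ : ℝ) (f g : C(K, ℝ)) : Prop :=
  Prec f g ∧ δ ≤ ‖f - g‖

/-- `F` is a `δ`-`≺`-chain. -/
def IsPrecChain {K : Type*} [TopologicalSpace K] [CompactSpace K] (δ : ℝ)
    (F : Set C(K, ℝ)) : Prop :=
  ∀ f ∈ F, ∀ g ∈ F, f ≠ g → PrecDelta δ f g ∨ PrecDelta δ g f

/-- A compact Hausdorff space has the Bishop property (B) if for every `δ > 0`
every `δ`-`≺`-chain in `C(K)` is countable. -/
def HasBishop (K : Type*) [TopologicalSpace K] [CompactSpace K] [T2Space K] : Prop :=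
  ∀ δ : ℝ, 0 < δ → ∀ F : Set C(K, ℝ), IsPrecChain δ F → F.Countable

/-- The weak form of `Prec`, for arbitrary real functions: `g` agrees with `f` wherever `f` does
not vanish. -/
def ExtendsOffZeros {K : Type*} (f g : K → ℝ) : Prop :=
  ∀ t, f t ≠ 0 → g t = f t

theorem eventually_apply_ne {K : Type*} {h : K → ℝ} {t : K} {a : ℝ} (ha : h t ≠ a) :
    ∀ᶠ g in 𝓝 h, g t ≠ a :=
  (continuous_apply t).continuousAt.eventually_ne ha

section SeparatedChain

variable {K : Type*} [TopologicalSpace K] [CompactSpace K] {δ : ℝ} {F : Set (K → ℝ)} {h : K → ℝ}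

/-- A continuous function is not a pointwise limit of members of a `δ`-separated chain that
vanish somewhere where it does not. -/
theorem not_frequently_mem_chain_below (hδ : 0 < δ) (hc : ∀ f ∈ F, Continuous f)
    (htot : ∀ f ∈ F, ∀ g ∈ F, ExtendsOffZeros f g ∨ ExtendsOffZeros g f)
    (hsep : ∀ f ∈ F, ∀ g ∈ F, f ≠ g → ∃ t, δ ≤ |f t - g t|) (hh : Continuous h) :
    ¬ ∃ᶠ g in 𝓝 h, g ∈ F ∧ ∃ t, g t = 0 ∧ h t ≠ 0 := by
  intro hfr
  set L : Set (K → ℝ) := {g | g ∈ F ∧ ∃ t, g t = 0 ∧ h t ≠ 0}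
  have hfrL : ∃ᶠ g in 𝓝 h, g ∈ L := hfr
  have h_eq : ∀ f ∈ L, ∀ s, f s ≠ 0 → h s = f s := by
    rintro f ⟨hfF, t, hft, hht⟩ s hs
    by_contra hne
    obtain ⟨g, hg, hgt, hgs⟩ :=
      (hfrL.and_eventually ((eventually_apply_ne hht).and (eventually_apply_ne hne))).exists
    rcases htot f hfF g hg.1 with hfg | hgf
    · exact hgs (hfg s hs)
    · exact hgt ((hgf t hgt).symm.trans hft)
  have hcompact : IsCompact {t | δ ≤ |h t|} :=
    (isClosed_le continuous_const hh.abs).isCompact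
  obtain ⟨f₀, hf₀⟩ := hfrL.exists
  have : Nonempty L := ⟨⟨f₀, hf₀⟩⟩
  obtain ⟨⟨f, hf⟩, hcover⟩ := hcompact.elim_directed_cover
    (fun f : L => {t | (f : K → ℝ) t ≠ 0})
    (fun f => isOpen_ne_fun (hc f f.2.1) continuous_const)
    (by
      intro t ht
      have hht : h t ≠ 0 := abs_pos.1 (hδ.trans_le ht)
      obtain ⟨g, hg, hgt⟩ := (hfrL.and_eventually (eventually_apply_ne hht)).exists
      exact mem_iUnion.2 ⟨⟨g, hg⟩, hgt⟩)
    (by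
      intro f g
      rcases htot f f.2.1 g g.2.1 with hfg | hgf
      · exact ⟨g, fun t ht => by simpa [hfg t ht] using ht, subset_rfl⟩
      · exact ⟨f, subset_rfl, fun t ht => by simpa [hgf t ht] using ht⟩)
  obtain ⟨t, hft, hht⟩ := hf.2
  obtain ⟨g, hg, hgt⟩ := (hfrL.and_eventually (eventually_apply_ne hht)).exists
  have hfg : ExtendsOffZeros f g := (htot f hf.1 g hg.1).resolve_right fun hgf =>
    hgt ((hgf t hgt).symm.trans hft)
  have hne : f ≠ g := fun e => hgt (e ▸ hft)
  obtain ⟨u, hu⟩ := hsep f hf.1 g hg.1 hne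
  by_cases hfu : f u = 0
  · have hgu : δ ≤ |g u| := by simpa [hfu] using hu
    have hhu : h u = g u := h_eq g hg u (abs_pos.1 (hδ.trans_le hgu))
    exact hcover (show δ ≤ |h u| from hhu ▸ hgu) hfu
  · rw [hfg u hfu, sub_self, abs_zero] at hu
    exact hu.not_gt hδ

/-- A continuous function is not a pointwise limit of members of a `δ`-separated chain that
are nonzero somewhere where it vanishes. -/
theorem not_frequently_mem_chain_above (hδ : 0 < δ) (hc : ∀ f ∈ F, Continuous f)
    (htot : ∀ f ∈ F, ∀ g ∈ F, ExtendsOffZeros f g ∨ ExtendsOffZeros g f)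
    (hsep : ∀ f ∈ F, ∀ g ∈ F, f ≠ g → ∃ t, δ ≤ |f t - g t|) (hh : Continuous h) :
    ¬ ∃ᶠ g in 𝓝 h, g ∈ F ∧ ∃ t, g t ≠ 0 ∧ h t = 0 := by
  intro hfr
  set U : Set (K → ℝ) := {g | g ∈ F ∧ ∃ t, g t ≠ 0 ∧ h t = 0}
  have hfrU : ∃ᶠ g in 𝓝 h, g ∈ U := hfr
  have h_eq : ∀ f ∈ U, ∀ s, h s ≠ 0 → h s = f s := by
    rintro f ⟨hfF, t, hft, hht⟩ s hs
    by_contra hne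
    have hht' : h t ≠ f t := fun e => hft (e.symm.trans hht)
    obtain ⟨g, hg, hgt, hgs, hgs0⟩ := (hfrU.and_eventually ((eventually_apply_ne hht').and
      ((eventually_apply_ne hne).and (eventually_apply_ne hs)))).exists
    rcases htot f hfF g hg.1 with hfg | hgf
    · exact hgt (hfg t hft)
    · exact hgs (hgf s hgs0).symm
  have hcompact : IsCompact {t | h t = 0} := (isClosed_eq hh continuous_const).isCompact
  obtain ⟨f₀, hf₀⟩ := hfrU.exists
  have : Nonempty U := ⟨⟨f₀, hf₀⟩⟩
  have h_smaller : ∀ f ∈ U, ∀ t, h t = 0 → f t ≠ 0 →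
      ∃ g ∈ U, g t = 0 ∧ ExtendsOffZeros g f := by
    intro f hf t hht hft
    have hht' : h t ≠ f t := fun e => hft (e.symm.trans hht)
    obtain ⟨g, hg, hgt⟩ := (hfrU.and_eventually (eventually_apply_ne hht')).exists
    have hgf : ExtendsOffZeros g f := (htot f hf.1 g hg.1).resolve_left fun hfg =>
      hgt (hfg t hft)
    exact ⟨g, hg, by_contra fun h0 => hgt (hgf t h0).symm, hgf⟩
  have h_mono : ∀ f g : K → ℝ, ExtendsOffZeros f g → {t | |g t| < δ} ⊆ {t | |f t| < δ} := by
    intro f g hfg t ht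
    by_cases hft : f t = 0
    · simpa [hft] using hδ
    · simpa [hfg t hft] using ht
  obtain ⟨⟨f, hf⟩, hcover⟩ := hcompact.elim_directed_cover
    (fun f : U => {t | |(f : K → ℝ) t| < δ})
    (fun f => isOpen_lt (hc f f.2.1).abs continuous_const)
    (by
      intro t ht
      by_cases h0 : f₀ t = 0
      · exact mem_iUnion.2 ⟨⟨f₀, hf₀⟩, by simpa [h0] using hδ⟩
      · obtain ⟨g, hg, hgt, -⟩ := h_smaller f₀ hf₀ t ht h0
        exact mem_iUnion.2 ⟨⟨g, hg⟩, by simpa [hgt] using hδ⟩)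
    (by
      intro f g
      rcases htot f f.2.1 g g.2.1 with hfg | hgf
      · exact ⟨f, subset_rfl, h_mono _ _ hfg⟩
      · exact ⟨g, h_mono _ _ hgf, subset_rfl⟩)
  obtain ⟨t, hft, hht⟩ := hf.2
  obtain ⟨g, hg, hgt, hgf⟩ := h_smaller f hf t hht hft
  have hne : f ≠ g := fun e => hft (e ▸ hgt)
  obtain ⟨u, hu⟩ := hsep f hf.1 g hg.1 hne
  by_cases hgu : g u = 0
  · have hfu : δ ≤ |f u| := by simpa [hgu] using hu
    have hhu : h u ≠ 0 := fun h0 => (hcover h0).not_ge hfu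
    exact hhu ((h_eq g hg u hhu).trans hgu)
  · rw [hgf u hgu, sub_self, abs_zero] at hu
    exact hu.not_gt hδ

/-- A `δ`-separated chain of continuous functions has no continuous pointwise accumulation
point. -/
theorem eventually_mem_chain_imp_eq (hδ : 0 < δ) (hc : ∀ f ∈ F, Continuous f)
    (htot : ∀ f ∈ F, ∀ g ∈ F, ExtendsOffZeros f g ∨ ExtendsOffZeros g f)
    (hsep : ∀ f ∈ F, ∀ g ∈ F, f ≠ g → ∃ t, δ ≤ |f t - g t|) (hh : Continuous h) :
    ∀ᶠ g in 𝓝 h, g ∈ F → g = h := by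
  by_cases hfr : ∃ᶠ g in 𝓝 h, g ∈ F
  · have hL := not_frequently.1 (not_frequently_mem_chain_below hδ hc htot hsep hh)
    have hU := not_frequently.1 (not_frequently_mem_chain_above hδ hc htot hsep hh)
    filter_upwards [hL, hU] with f hfL hfU hf
    by_contra hne
    obtain ⟨t, ht⟩ := Function.ne_iff.1 hne
    by_cases hft : f t = 0
    · exact hfL ⟨hf, t, hft, fun h0 => ht (hft.trans h0.symm)⟩
    by_cases hht : h t = 0
    · exact hfU ⟨hf, t, hft, hht⟩
    obtain ⟨g, hg, hgt, hgft⟩ := (hfr.and_eventually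
      ((eventually_apply_ne hht).and (eventually_apply_ne (Ne.symm ht)))).exists
    rcases htot f hf g hg with hfg | hgf
    · exact hgft (hfg t hft)
    · exact hgft (hgf t hgt).symm
  · exact (not_frequently.1 hfr).mono fun g hg hgF => absurd hgF hg

end SeparatedChain

theorem Prec.extendsOffZeros {K : Type*} [TopologicalSpace K] {f g : C(K, ℝ)} (hfg : Prec f g) :
    ExtendsOffZeros f g :=
  fun t ht => (hfg.2 t (subset_closure ht)).symm

theorem ContinuousMap.exists_le_abs_sub_of_le_norm_sub {K : Type*} [TopologicalSpace K]
    [CompactSpace K] {δ : ℝ} (hδ : 0 < δ) {f g : C(K, ℝ)} (hfg : δ ≤ ‖f - g‖) :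
    ∃ t, δ ≤ |f t - g t| := by
  by_contra! hlt
  exact hfg.not_gt ((ContinuousMap.norm_lt_iff _ hδ).2 hlt)

/-- If `C_p(K)` — the set of continuous real-valued functions on `K` viewed as a
subspace of `ℝ^K` with the product (pointwise convergence) topology — is Lindelöf,
then `K` has the Bishop property (B). -/
theorem stmt14 {K : Type*} [TopologicalSpace K] [CompactSpace K] [T2Space K]
    (hL : IsLindelof {f : K → ℝ | Continuous f}) : HasBishop K := by
  intro δ hδ F hF
  set G : Set (K → ℝ) := (fun f : C(K, ℝ) => (f : K → ℝ)) '' F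
  have hc : ∀ f ∈ G, Continuous f := by
    rintro _ ⟨f, -, rfl⟩
    exact f.continuous
  have htot : ∀ f ∈ G, ∀ g ∈ G, ExtendsOffZeros f g ∨ ExtendsOffZeros g f := by
    rintro _ ⟨f, hf, rfl⟩ _ ⟨g, hg, rfl⟩
    by_cases hfg : f = g
    · exact Or.inl fun t _ => by rw [hfg]
    · exact (hF f hf g hg hfg).imp (fun h => h.1.extendsOffZeros) fun h => h.1.extendsOffZeros
  have hsep : ∀ f ∈ G, ∀ g ∈ G, f ≠ g → ∃ t, δ ≤ |f t - g t| := by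
    rintro _ ⟨f, hf, rfl⟩ _ ⟨g, hg, rfl⟩ hne
    have hfg : f ≠ g := fun e => hne (congrArg _ e)
    refine ContinuousMap.exists_le_abs_sub_of_le_norm_sub hδ ?_
    rcases hF f hf g hg hfg with h | h
    · exact h.2
    · exact norm_sub_rev g f ▸ h.2
  obtain ⟨T, hT, -, hcover⟩ := hL.elim_nhds_subcover (fun h => {g | g ∈ G → g = h})
    fun h hh => eventually_mem_chain_imp_eq hδ hc htot hsep hh
  have hGT : G ⊆ T := by
    intro g hg
    obtain ⟨h, hhT, hgh⟩ := mem_iUnion₂.1 (hcover (hc g hg))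
    exact (hgh hg : g = h) ▸ hhT
  exact countable_of_injective_of_countable_image DFunLike.coe_injective.injOn (hT.mono hGT)
end

section
/- Let K and M be compact Hausdorff spaces and π : K → M a continuous surjection. If K has the Bishop property (B), then M has the Bishop property (B). -/
open Set Topology Filter

/-- Composition with a continuous surjection does not decrease the sup norm. -/
lemma norm_le_norm_comp_of_surjective {K M : Type*} [TopologicalSpace K] [CompactSpace K]
    [TopologicalSpace M] [CompactSpace M] {p : C(K, M)} (hp : Function.Surjective p)
    (f : C(M, ℝ)) : ‖f‖ ≤ ‖f.comp p‖ := by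
  refine (ContinuousMap.norm_le _ (norm_nonneg _)).2 fun x => ?_
  obtain ⟨y, rfl⟩ := hp x
  exact (f.comp p).norm_coe_le_norm y

/-- The relation `≺` is preserved by composition with a continuous surjection. -/
lemma Prec.comp {K M : Type*} [TopologicalSpace K] [TopologicalSpace M] {p : C(K, M)}
    (hp : Function.Surjective p) {f g : C(M, ℝ)} (h : Prec f g) :
    Prec (f.comp p) (g.comp p) :=
  ⟨fun e => h.1 ((ContinuousMap.cancel_right hp).1 e), fun t ht =>
    h.2 (p t) (p.continuous.closure_preimage_subset {s | f s ≠ 0} ht)⟩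

/-- The relation `≺_δ` is preserved by composition with a continuous surjection. -/
lemma PrecDelta.comp {K M : Type*} [TopologicalSpace K] [CompactSpace K]
    [TopologicalSpace M] [CompactSpace M] {p : C(K, M)} (hp : Function.Surjective p)
    {δ : ℝ} {f g : C(M, ℝ)} (h : PrecDelta δ f g) :
    PrecDelta δ (f.comp p) (g.comp p) :=
  ⟨h.1.comp hp, h.2.trans (norm_le_norm_comp_of_surjective hp (f - g))⟩

/-- If `π : K → M` is a continuous surjection between compact Hausdorff spaces and `K`
has the Bishop property (B), then so does `M`. -/
theorem stmt15 {K M : Type*} [TopologicalSpace K] [CompactSpace K] [T2Space K]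
    [TopologicalSpace M] [CompactSpace M] [T2Space M]
    (π : K → M) (hcont : Continuous π) (hsurj : Function.Surjective π)
    (hK : HasBishop K) : HasBishop M := by
  intro δ hδ F hF
  let p : C(K, M) := ⟨π, hcont⟩
  have hp : Function.Surjective p := hsurj
  have hinj : Function.Injective fun f : C(M, ℝ) => f.comp p :=
    fun _ _ e => (ContinuousMap.cancel_right hp).1 e
  refine countable_of_injective_of_countable_image hinj.injOn (hK δ hδ _ ?_)
  rintro _ ⟨f, hf, rfl⟩ _ ⟨g, hg, rfl⟩ hne
  exact (hF f hf g hg fun e => hne (e ▸ rfl)).imp (.comp hp) (.comp hp)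
end

section
/- The ordinal interval [0, ω₁] (the set of ordinals ≤ ω₁ with the order topology, a compact Hausdorff space, where ω₁ is the first uncountable ordinal) does not have the Bishop property (B): the family of indicator functions {𝟙_{[0,α]} : α < ω₁} is an uncountable 1-≺-chain in C([0, ω₁]). -/
open Set Topology Filter Ordinal

noncomputable instance : CompactSpace ↥(Set.Iic (ω₁ : Ordinal)) :=
  isCompact_iff_compactSpace.mp (by rw [← Set.Icc_bot]; exact isCompact_Icc)

/-- The family of indicator functions `𝟙_{[0,α]}` for `α < ω₁`, as continuous
functions on `[0, ω₁]`. -/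
def IndicatorChain : Set C(↥(Set.Iic (ω₁ : Ordinal)), ℝ) :=
  {f | ∃ α : Ordinal, α < ω₁ ∧
    ∀ x : ↥(Set.Iic (ω₁ : Ordinal)), f x = if (x : Ordinal) ≤ α then 1 else 0}

/-- The indicator function of the clopen initial segment `[0, α]` of `[0, ω₁]`. -/
noncomputable def initialSegmentIndicator (α : Ordinal) : C(↥(Set.Iic (ω₁ : Ordinal)), ℝ) where
  toFun x := if (x : Ordinal) ≤ α then 1 else 0
  continuous_toFun := by
    have hclopen : IsClopen {x : ↥(Set.Iic (ω₁ : Ordinal)) | (x : Ordinal) ≤ α} := by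
      refine ⟨isClosed_Iic.preimage continuous_subtype_val, ?_⟩
      have : {x : ↥(Set.Iic (ω₁ : Ordinal)) | (x : Ordinal) ≤ α} =
          Subtype.val ⁻¹' Set.Iio (Order.succ α) := by
        ext x
        simp
      rw [this]
      exact isOpen_Iio.preimage continuous_subtype_val
    refine continuous_const.if (fun a ha => ?_) continuous_const
    rw [hclopen.frontier_eq] at ha
    exact ha.elim

theorem initialSegmentIndicator_injOn :
    Set.InjOn initialSegmentIndicator (Set.Iio (ω₁ : Ordinal)) := by
  have key : ∀ α ∈ Set.Iio (ω₁ : Ordinal), ∀ β ∈ Set.Iio (ω₁ : Ordinal),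
      initialSegmentIndicator α = initialSegmentIndicator β → α ≤ β := by
    intro α hα β _ h
    by_contra hle
    have := DFunLike.congr_fun h ⟨α, Set.mem_Iic.mpr (Set.mem_Iio.mp hα).le⟩
    simp [initialSegmentIndicator, hle] at this
  intro α hα β hβ h
  exact le_antisymm (key α hα β hβ h) (key β hβ α hα h.symm)

theorem not_countable_Iio_omega_one : ¬ (Set.Iio (ω₁ : Ordinal)).Countable := by
  rw [← Cardinal.le_aleph0_iff_set_countable, Cardinal.mk_Iio_ordinal, card_omega]
  simp

theorem not_countable_indicatorChain : ¬ IndicatorChain.Countable := by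
  intro h
  refine not_countable_Iio_omega_one ?_
  refine Set.MapsTo.countable_of_injOn (fun α hα => ?_) initialSegmentIndicator_injOn h
  exact ⟨α, hα, fun _ => rfl⟩

/-- Indicators of initial segments `[0, α] ⊂ [0, β]` are related by `≺₁`. -/
theorem precDelta_of_lt {α β : Ordinal} (hαβ : α < β) (hβ : β < ω₁)
    {f g : C(↥(Set.Iic (ω₁ : Ordinal)), ℝ)}
    (hf : ∀ x : ↥(Set.Iic (ω₁ : Ordinal)), f x = if (x : Ordinal) ≤ α then 1 else 0)
    (hg : ∀ x : ↥(Set.Iic (ω₁ : Ordinal)), g x = if (x : Ordinal) ≤ β then 1 else 0) :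
    PrecDelta 1 f g := by
  have hnorm : 1 ≤ ‖f - g‖ := by
    have := (f - g).norm_coe_le_norm ⟨β, hβ.le⟩
    simpa [hf, hg, hαβ.not_ge] using this
  refine ⟨⟨?_, fun t ht => ?_⟩, hnorm⟩
  · rintro rfl
    norm_num at hnorm
  · have hclosed : IsClosed {x : ↥(Set.Iic (ω₁ : Ordinal)) | (x : Ordinal) ≤ α} :=
      isClosed_Iic.preimage continuous_subtype_val
    have hsub : {x | f x ≠ 0} ⊆ {x : ↥(Set.Iic (ω₁ : Ordinal)) | (x : Ordinal) ≤ α} := by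
      intro x hx
      by_contra hxα
      exact hx ((hf x).trans (if_neg hxα))
    have htα : (t : Ordinal) ≤ α := closure_minimal hsub hclosed ht
    rw [hf, hg, if_pos htα, if_pos (htα.trans hαβ.le)]

theorem isPrecChain_indicatorChain : IsPrecChain 1 IndicatorChain := by
  rintro f ⟨α, hα, hf⟩ g ⟨β, hβ, hg⟩ hfg
  rcases lt_trichotomy α β with h | rfl | h
  · exact Or.inl (precDelta_of_lt h hβ hf hg)
  · exact absurd (ContinuousMap.ext fun x => (hf x).trans (hg x).symm) hfg
  · exact Or.inr (precDelta_of_lt h hα hg hf)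

/-- The ordinal interval `[0, ω₁]` (with the order topology, a compact Hausdorff
space) does not have the Bishop property (B): the family of indicator functions
`{𝟙_{[0,α]} : α < ω₁}` is an uncountable `1`-`≺`-chain in `C([0, ω₁])`. -/
theorem stmt16 :
    ¬ IndicatorChain.Countable ∧ IsPrecChain 1 IndicatorChain ∧
      ¬ HasBishop ↥(Set.Iic (ω₁ : Ordinal)) := by
  exact ⟨not_countable_indicatorChain, isPrecChain_indicatorChain, fun h =>
    not_countable_indicatorChain (h 1 one_pos _ isPrecChain_indicatorChain)⟩
end

section
/- The Stone–Čech compactification βℕ of the natural numbers with the discrete topology does not have the Bishop property (B): there is an uncountable 1-≺-chain in C(βℕ). -/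
open Set Topology Filter

/-- The continuous extension to `βℕ` of the indicator function of `A ⊆ ℕ`. -/
noncomputable def stoneCechIndicator (A : Set ℕ) : C(StoneCech ℕ, ℝ) :=
  open scoped Classical in
  (⟨fun b : Bool => if b then 1 else 0, continuous_of_discreteTopology⟩ : C(Bool, ℝ)).comp
    ⟨stoneCechExtend (continuous_of_discreteTopology (f := fun n : ℕ => decide (n ∈ A))),
      continuous_stoneCechExtend _⟩

lemma stoneCechIndicator_unit (A : Set ℕ) (n : ℕ) :
    stoneCechIndicator A (stoneCechUnit n) = A.indicator 1 n := by
  classical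
  simp [stoneCechIndicator, stoneCechExtend_stoneCechUnit, Set.indicator_apply]

lemma stoneCechIndicator_mul_of_subset {A B : Set ℕ} (h : A ⊆ B) (t : StoneCech ℕ) :
    stoneCechIndicator A t * stoneCechIndicator B t = stoneCechIndicator A t ^ 2 := by
  refine congrFun (denseRange_stoneCechUnit.equalizer
    (g := fun t => stoneCechIndicator A t * stoneCechIndicator B t)
    (h := fun t => stoneCechIndicator A t ^ 2) (by fun_prop) (by fun_prop) ?_) t
  funext n
  by_cases hA : n ∈ A
  · simp [stoneCechIndicator_unit, hA, h hA]
  · simp [stoneCechIndicator_unit, hA]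

lemma one_le_norm_stoneCechIndicator_sub {A B : Set ℕ} (h : A ⊂ B) :
    1 ≤ ‖stoneCechIndicator A - stoneCechIndicator B‖ := by
  obtain ⟨n, hB, hA⟩ := Set.exists_of_ssubset h
  simpa [stoneCechIndicator_unit, hA, hB] using
    (stoneCechIndicator A - stoneCechIndicator B).norm_coe_le_norm (stoneCechUnit n)

lemma precDelta_stoneCechIndicator {A B : Set ℕ} (h : A ⊂ B) :
    PrecDelta 1 (stoneCechIndicator A) (stoneCechIndicator B) := by
  have hnorm := one_le_norm_stoneCechIndicator_sub h
  refine ⟨⟨fun heq => ?_, fun t ht => ?_⟩, hnorm⟩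
  · norm_num [heq] at hnorm
  · refine closure_minimal (t := {t | stoneCechIndicator A t = stoneCechIndicator B t})
      (fun s hs => ?_) (isClosed_eq (map_continuous _) (map_continuous _)) ht
    have hmul := stoneCechIndicator_mul_of_subset h.subset s
    rw [sq] at hmul
    exact (mul_left_cancel₀ hs hmul).symm

/-- The indices of the rationals below `r`. -/
def rationalCut (r : ℝ) : Set ℕ := {n | ((Denumerable.eqv ℚ).symm n : ℝ) < r}

lemma rationalCut_strictMono : StrictMono rationalCut := by
  intro r s h
  obtain ⟨q, hr, hs⟩ := exists_rat_btwn h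
  refine Set.ssubset_iff_exists.2 ⟨fun n hn => lt_trans hn h, Denumerable.eqv ℚ q, ?_, ?_⟩
  · simpa only [rationalCut, mem_ofPred_eq, Equiv.symm_apply_apply, not_lt] using hs
  · simpa only [rationalCut, mem_ofPred_eq, Equiv.symm_apply_apply, not_lt] using hr.le

lemma isPrecChain_range_rationalCut :
    IsPrecChain 1 (range fun r => stoneCechIndicator (rationalCut r)) := by
  rintro _ ⟨r, rfl⟩ _ ⟨s, rfl⟩ hne
  rcases lt_trichotomy r s with h | rfl | h
  · exact Or.inl (precDelta_stoneCechIndicator (rationalCut_strictMono h))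
  · exact absurd rfl hne
  · exact Or.inr (precDelta_stoneCechIndicator (rationalCut_strictMono h))

lemma not_countable_range_rationalCut :
    ¬ (range fun r => stoneCechIndicator (rationalCut r)).Countable := by
  have hinj : Function.Injective fun r => stoneCechIndicator (rationalCut r) := by
    intro r s heq
    by_contra hne
    rcases lt_or_gt_of_ne hne with h | h
    · exact (precDelta_stoneCechIndicator (rationalCut_strictMono h)).1.1 heq
    · exact (precDelta_stoneCechIndicator (rationalCut_strictMono h)).1.1 heq.symm
  rw [← image_univ]
  exact fun h => not_countable_univ (Set.countable_of_injective_of_countable_image hinj.injOn h)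

/-- `βℕ` does not have the Bishop property (B): there is an uncountable `1`-`≺`-chain
in `C(βℕ)`. -/
theorem stmt17 :
    (∃ F : Set C(StoneCech ℕ, ℝ), ¬ F.Countable ∧ IsPrecChain 1 F) ∧
      ¬ HasBishop (StoneCech ℕ) := by
  have hF := isPrecChain_range_rationalCut
  have hunc := not_countable_range_rationalCut
  exact ⟨⟨_, hunc, hF⟩, fun h => hunc (h 1 one_pos _ hF)⟩
end

section
/- The Bishop property (B) is not preserved under Banach space isomorphisms of C(K)-spaces: there exist compact Hausdorff spaces K₁ and K₂ such that the Banach spaces C(K₁) and C(K₂) are isomorphic (linearly homeomorphic), K₁ has the Bishop property (B), and K₂ does not have the Bishop property (B). -/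
open Set Topology Filter

theorem hasBishop_of_locallyConnectedSpace (K : Type*) [TopologicalSpace K] [CompactSpace K]
    [T2Space K] [LocallyConnectedSpace K] : HasBishop K := by
  intro δ hδ F hF
  let S : C(K, ℝ) → Set (Set K) := fun g =>
    connectedComponentIn {t | g t ≠ 0} '' {t | δ ≤ |g t|}
  have hsub (g : C(K, ℝ)) : {t | δ ≤ |g t|} ⊆ {t | g t ≠ 0} := fun t ht =>
    abs_pos.mp (hδ.trans_le ht)
  have hopen (g : C(K, ℝ)) : IsOpen {t | g t ≠ 0} := isOpen_ne_fun g.continuous continuous_const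
  have hfin (g : C(K, ℝ)) : (S g).Finite := by
    have hc : IsCompact {t | δ ≤ |g t|} :=
      (isClosed_le continuous_const g.continuous.abs).isCompact
    obtain ⟨T, hT, hcov⟩ := hc.elim_nhds_subcover (connectedComponentIn {t | g t ≠ 0})
      fun t ht => connectedComponentIn_mem_nhds ((hopen g).mem_nhds (hsub g ht))
    refine (T.finite_toSet.image (connectedComponentIn {t | g t ≠ 0})).subset ?_
    rintro _ ⟨t, ht, rfl⟩
    obtain ⟨s, hs, hts⟩ := mem_iUnion₂.mp (hcov ht)
    exact ⟨s, hs, connectedComponentIn_eq hts⟩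
  have hlt (f g : C(K, ℝ)) (h : PrecDelta δ f g) : (S f).ncard < (S g).ncard := by
    obtain ⟨⟨-, hfg⟩, hn⟩ := h
    refine ncard_lt_ncard ⟨?_, fun hsup => ?_⟩ (hfin g)
    · rintro _ ⟨t, ht, rfl⟩
      have hft : f t ≠ 0 := hsub f ht
      have hgt : f t = g t := hfg t (subset_closure hft)
      refine ⟨t, by simpa [← hgt] using ht, ?_⟩
      have htg : t ∈ {t | g t ≠ 0} := by simpa [← hgt] using hft
      refine Subset.antisymm ?_ (connectedComponentIn_mono t fun s hs => ?_)
      · refine isPreconnected_connectedComponentIn.subset_connectedComponentIn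
          (mem_connectedComponentIn htg) ?_
        refine isPreconnected_connectedComponentIn.subset_left_of_subset_union (hopen f)
          isClosed_closure.isOpen_compl (disjoint_compl_right.mono_left subset_closure)
          (fun s hs => ?_) ⟨t, mem_connectedComponentIn htg, hft⟩
        by_cases hsc : s ∈ closure {t | f t ≠ 0}
        · left
          have : g s ≠ 0 := connectedComponentIn_subset _ _ hs
          simpa [hfg s hsc] using this
        · exact Or.inr hsc
      · have := hfg s (subset_closure hs)
        simpa [← this] using hs
    · obtain ⟨t, ht⟩ : ∃ t, δ ≤ |f t - g t| := by
        by_contra! hall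
        exact absurd hn (not_le.mpr ((ContinuousMap.norm_lt_iff _ hδ).mpr hall))
      have hft : f t = 0 := by
        by_contra hne
        rw [hfg t (subset_closure hne), sub_self, abs_zero] at ht
        exact absurd hδ (not_lt.mpr ht)
      have htg : δ ≤ |g t| := by simpa [hft] using ht
      obtain ⟨s, -, hs⟩ := hsup ⟨t, htg, rfl⟩
      have hmem : t ∈ connectedComponentIn {t | f t ≠ 0} s := by
        rw [hs]
        exact mem_connectedComponentIn (hsub g htg)
      exact connectedComponentIn_subset _ _ hmem hft
  refine MapsTo.countable_of_injOn (mapsTo_univ (fun g => (S g).ncard) F)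
    (fun f hf g hg hfg => ?_) countable_univ
  by_contra hne
  rcases hF f hf g hg hne with h | h
  · exact (hlt f g h).ne hfg
  · exact (hlt g f h).ne' hfg

theorem Convex.locallyConnectedSpace {E : Type*} [AddCommGroup E] [Module ℝ E]
    [TopologicalSpace E] [ContinuousAdd E] [ContinuousSMul ℝ E] [LocallyConvexSpace ℝ E]
    {s : Set E} (hs : Convex ℝ s) : LocallyConnectedSpace s := by
  rw [locallyConnectedSpace_iff_connected_subsets]
  intro x U hU
  obtain ⟨W, hW, hWU⟩ := mem_nhds_induced _ _ _ |>.mp hU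
  obtain ⟨V, ⟨hV, hVc⟩, hVW⟩ := (LocallyConvexSpace.convex_basis (𝕜 := ℝ) x.1).mem_iff.mp hW
  refine ⟨(↑) ⁻¹' V, continuous_subtype_val.continuousAt.preimage_mem_nhds hV, ?_,
    (preimage_mono hVW).trans hWU⟩
  rw [← IsInducing.subtypeVal.isPreconnected_image, Subtype.image_preimage_coe]
  exact (hs.inter hVc).isPreconnected

/-- An uncountable increasing family of clopen sets, encoded by indicator functions, is an
uncountable chain. -/
theorem not_hasBishop_of_monotone {K ι : Type*} [TopologicalSpace K] [CompactSpace K] [T2Space K]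
    [LinearOrder ι] [Uncountable ι] (f : ι → C(K, ℝ)) (hinj : Function.Injective f)
    (hmono : Monotone f) (h01 : ∀ i t, f i t = 0 ∨ f i t = 1) : ¬ HasBishop K := by
  intro hB
  have key (i j : ι) (hij : i ≤ j) (hne : f i ≠ f j) : PrecDelta 1 (f i) (f j) := by
    refine ⟨⟨hne, fun t ht => ?_⟩, ?_⟩
    · have hcl : IsClosed {t | f i t = 1} := isClosed_eq (f i).continuous continuous_const
      have h1 : f i t = 1 :=
        closure_minimal (fun s hs => (h01 i s).resolve_left hs) hcl ht
      have hle : f i t ≤ f j t := hmono hij t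
      rcases h01 j t with h | h <;> linarith
    · obtain ⟨t, ht⟩ := DFunLike.ne_iff.mp hne
      refine le_trans ?_ ((f i - f j).norm_coe_le_norm t)
      rcases h01 i t with h | h <;> rcases h01 j t with h' | h' <;> simp_all
  have hc := hB 1 one_pos (range f) <| by
    rintro _ ⟨i, rfl⟩ _ ⟨j, rfl⟩ hne
    rcases le_total i j with h | h
    · exact Or.inl (key i j h hne)
    · exact Or.inr (key j i h hne.symm)
  have := hc.to_subtype
  exact not_countable ((Equiv.ofInjective f hinj).countable_iff.mpr this)

section Collapse

variable {F B : Type*} [TopologicalSpace F] [TopologicalSpace B] (ι : C(F, B))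
  (E : C(F, ℝ) →ₗ[ℝ] C(B, ℝ)) (p : F)

/-- The function on `F ⊕ B` which is `g ∘ ι` on `F`, and `g - E (g ∘ ι) + g (ι p)` on `B`. -/
def collapseFun (g : C(B, ℝ)) : F ⊕ B → ℝ :=
  Sum.elim (fun x => g (ι x)) fun b => g b - E (g.comp ι) b + g (ι p)

theorem continuous_collapseFun (g : C(B, ℝ)) : Continuous (collapseFun ι E p g) :=
  Continuous.sumElim (by fun_prop) (by fun_prop)

/-- If `E` is an extension operator along the embedding `ι`, this is the space obtained
from `F ⊕ B` by collapsing `ι '' F ⊆ B` to the point `p` of `F`. -/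
def Collapse : Set (C(B, ℝ) → ℝ) := range fun z g => collapseFun ι E p g z

/-- The quotient map onto `Collapse ι E p`. -/
def Collapse.mk : C(F ⊕ B, Collapse ι E p) where
  toFun z := ⟨fun g => collapseFun ι E p g z, z, rfl⟩
  continuous_toFun := (continuous_pi fun g => continuous_collapseFun ι E p g).subtype_mk _

/-- The linear isomorphism between `C(B)` and the continuous functions on `Collapse ι E p`. -/
def Collapse.linearEquiv (hE : ∀ f x, E f (ι x) = f x) :
    C(B, ℝ) ≃ₗ[ℝ] C(Collapse ι E p, ℝ) where
  toFun g := ⟨fun k => k.1 g, (continuous_apply g).comp continuous_subtype_val⟩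
  map_add' g h := by
    ext ⟨_, z, rfl⟩
    rcases z with x | b
    · simp [collapseFun]
    · simp [collapseFun, ContinuousMap.add_comp]
      ring
  map_smul' c g := by
    ext ⟨_, z, rfl⟩
    rcases z with x | b
    · simp [collapseFun]
    · simp [collapseFun, ContinuousMap.smul_comp]
      ring
  invFun h := E ((h.comp (mk ι E p)).comp ⟨Sum.inl, continuous_inl⟩)
    + (h.comp (mk ι E p)).comp ⟨Sum.inr, continuous_inr⟩
    - ContinuousMap.const B (h (mk ι E p (Sum.inl p)))
  left_inv g := by
    ext b
    change E (g.comp ι) b + (g b - E (g.comp ι) b + g (ι p)) - g (ι p) = g b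
    ring
  right_inv h := by
    have hglue (x : F) : mk ι E p (Sum.inr (ι x)) = mk ι E p (Sum.inl p) := by
      ext g
      simp [mk, collapseFun, hE]
    ext ⟨_, z, rfl⟩
    have hF : ContinuousMap.comp (E ((h.comp (mk ι E p)).comp ⟨Sum.inl, continuous_inl⟩)
        + (h.comp (mk ι E p)).comp ⟨Sum.inr, continuous_inr⟩
        - ContinuousMap.const B (h (mk ι E p (Sum.inl p)))) ι
        = (h.comp (mk ι E p)).comp ⟨Sum.inl, continuous_inl⟩ := by
      ext x
      simp [hE, hglue]
    change collapseFun ι E p _ z = h (mk ι E p z)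
    rcases z with x | b
    · exact DFunLike.congr_fun hF x
    · simp only [collapseFun, Sum.elim_inr]
      rw [hF]
      simp only [ContinuousMap.sub_apply, ContinuousMap.add_apply, ContinuousMap.comp_apply,
        ContinuousMap.const_apply, ContinuousMap.coe_mk, hE, hglue]
      ring

theorem Collapse.continuous_linearEquiv_symm (hE : ∀ f x, E f (ι x) = f x) (hc : Continuous E) :
    Continuous (linearEquiv ι E p hE).symm :=
  ((hc.comp ((ContinuousMap.continuous_precomp _).comp
    (ContinuousMap.continuous_precomp _))).add ((ContinuousMap.continuous_precomp _).comp
    (ContinuousMap.continuous_precomp _))).sub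
    (ContinuousMap.continuous_const'.comp (continuous_eval_const _))

variable [CompactSpace F] [CompactSpace B]

instance : CompactSpace (Collapse ι E p) :=
  isCompact_iff_compactSpace.mp <|
    isCompact_range (continuous_pi fun g => continuous_collapseFun ι E p g)

/-- The Banach space isomorphism between `C(B)` and `C(Collapse ι E p)`. -/
noncomputable def Collapse.equiv (hE : ∀ f x, E f (ι x) = f x) (hc : Continuous E) :
    C(B, ℝ) ≃L[ℝ] C(Collapse ι E p, ℝ) :=
  ((linearEquiv ι E p hE).symm.toContinuousLinearEquivOfContinuous
    (continuous_linearEquiv_symm ι E p hE hc)).symm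

theorem not_hasBishop_collapse {J : Type*} [LinearOrder J] [Uncountable J]
    (hE : ∀ f x, E f (ι x) = f x) (f : J → C(F, ℝ)) (hinj : Function.Injective f)
    (hmono : Monotone f) (h01 : ∀ i t, f i t = 0 ∨ f i t = 1) :
    ¬ HasBishop (Collapse ι E p) := by
  have hcomp (i : J) : (E (f i)).comp ι = f i := by
    ext x
    exact hE (f i) x
  refine not_hasBishop_of_monotone (fun i => Collapse.linearEquiv ι E p hE (E (f i)))
    (fun i j hij => hinj ?_) (fun i j hij => ?_) (fun i => ?_)
  · rw [← hcomp i, ← hcomp j, (Collapse.linearEquiv ι E p hE).injective hij]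
  · rintro ⟨_, z, rfl⟩
    change collapseFun ι E p _ z ≤ collapseFun ι E p _ z
    rcases z with x | b
    · simpa [collapseFun, hE] using hmono hij x
    · simpa [collapseFun, hE, hcomp] using hmono hij p
  · rintro ⟨_, z, rfl⟩
    change collapseFun ι E p _ z = 0 ∨ collapseFun ι E p _ z = 1
    rcases z with x | b
    · simpa [collapseFun, hE] using h01 i x
    · simpa [collapseFun, hE, hcomp] using h01 i p

end Collapse

section DualBall

variable (F : Type*) [TopologicalSpace F] [CompactSpace F]

/-- The closed unit ball of the dual of `C(F)`, with the weak-* topology. -/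
abbrev DualBall : Set (WeakDual ℝ C(F, ℝ)) :=
  WeakDual.toStrongDual ⁻¹' Metric.closedBall 0 1

instance : CompactSpace (DualBall F) :=
  isCompact_iff_compactSpace.mp (WeakDual.isCompact_closedBall 0 1)

instance : LocallyConvexSpace ℝ (WeakDual ℝ C(F, ℝ)) :=
  inferInstanceAs (LocallyConvexSpace ℝ (WeakBilin (topDualPairing ℝ C(F, ℝ))))

instance : LocallyConnectedSpace (DualBall F) :=
  Convex.locallyConnectedSpace <|
    (convex_closedBall (0 : StrongDual ℝ C(F, ℝ)) 1).linear_preimage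
      (WeakDual.toStrongDual (𝕜 := ℝ) (E := C(F, ℝ))).toLinearMap

/-- The evaluation functionals, as a continuous map into the dual ball. -/
noncomputable def DualBall.eval : C(F, DualBall F) where
  toFun x := ⟨WeakDual.toStrongDual.symm (ContinuousMap.evalCLM ℝ x), by
    refine mem_closedBall_zero_iff (E := StrongDual ℝ C(F, ℝ)) |>.mpr ?_
    exact ContinuousLinearMap.opNorm_le_bound _ zero_le_one fun f =>
      (f.norm_coe_le_norm x).trans_eq (one_mul _).symm⟩
  continuous_toFun := by
    refine Continuous.subtype_mk (WeakDual.continuous_of_continuous_eval fun f => ?_) _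
    exact f.continuous

/-- The extension operator `f ↦ (φ ↦ φ f)` from `C(F)` to `C(DualBall F)`. -/
noncomputable def DualBall.extension : C(F, ℝ) →ₗ[ℝ] C(DualBall F, ℝ) where
  toFun f := ⟨fun φ => φ.1 f, (WeakDual.eval_continuous f).comp continuous_subtype_val⟩
  map_add' f g := by
    ext φ
    exact map_add φ.1 f g
  map_smul' c f := by
    ext φ
    exact map_smul φ.1 c f

theorem DualBall.continuous_extension : Continuous (extension F) := by
  refine AddMonoidHomClass.continuous_of_bound (extension F) 1 fun f => ?_
  refine (ContinuousMap.norm_le _ (by positivity)).mpr fun φ => ?_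
  exact (WeakDual.toStrongDual φ.1).le_of_opNorm_le (mem_closedBall_zero_iff.mp φ.2) f

end DualBall

/-- The indicator function of the clopen set of ultrafilters containing `s`. -/
noncomputable def ultrafilterIndicator {α : Type*} (s : Set α) : C(Ultrafilter α, ℝ) where
  toFun := indicator {u | s ∈ u} 1
  continuous_toFun := continuous_one.indicator
    (IsClopen.frontier_eq ⟨ultrafilter_isClosed_basic s, ultrafilter_isOpen_basic s⟩ ▸ by simp)

theorem ultrafilterIndicator_mono {α : Type*} :
    Monotone (ultrafilterIndicator : Set α → C(Ultrafilter α, ℝ)) := fun _ _ hst =>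
  indicator_le_indicator_of_subset (fun _ hu => mem_of_superset hu hst) fun _ => zero_le_one

theorem ultrafilterIndicator_injective {α : Type*} :
    Function.Injective (ultrafilterIndicator : Set α → C(Ultrafilter α, ℝ)) := by
  intro s t hst
  ext a
  have := DFunLike.congr_fun hst (pure a : Ultrafilter α)
  change indicator {u : Ultrafilter α | s ∈ u} (1 : Ultrafilter α → ℝ) (pure a) =
    indicator {u : Ultrafilter α | t ∈ u} 1 (pure a) at this
  by_cases hs : a ∈ s <;> by_cases ht : a ∈ t <;>
    simp [indicator, Ultrafilter.mem_pure, hs, ht] at this ⊢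

theorem injective_rat_cuts : Function.Injective fun r : ℝ => {q : ℚ | (q : ℝ) < r} := by
  refine Function.Injective.of_lt_imp_ne fun r s hrs h => ?_
  obtain ⟨q, hrq, hqs⟩ := exists_rat_btwn hrs
  exact lt_asymm hrq (h.symm.subset hqs)

/-- **Example 4.1.** The Bishop property (B) is not preserved under Banach space
isomorphisms of `C(K)`-spaces: there are compact Hausdorff spaces `K₁`, `K₂` with
`C(K₁)` and `C(K₂)` isomorphic as Banach spaces (linearly homeomorphic), such that
`K₁` has (B) and `K₂` does not. -/
theorem stmt18 :
    ∃ (K₁ K₂ : Type) (t₁ : TopologicalSpace K₁) (t₂ : TopologicalSpace K₂),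
      letI := t₁; letI := t₂;
      ∃ (c₁ : CompactSpace K₁) (c₂ : CompactSpace K₂)
        (h₁ : T2Space K₁) (h₂ : T2Space K₂),
        Nonempty (C(K₁, ℝ) ≃L[ℝ] C(K₂, ℝ)) ∧ HasBishop K₁ ∧ ¬ HasBishop K₂ := by
  let F := Ultrafilter ℚ
  have hE (f : C(F, ℝ)) (x : F) : DualBall.extension F f (DualBall.eval F x) = f x := rfl
  refine ⟨DualBall F, Collapse (DualBall.eval F) (DualBall.extension F) (pure 0),
    inferInstance, inferInstance, inferInstance, inferInstance, inferInstance, inferInstance,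
    ⟨Collapse.equiv _ _ _ hE (DualBall.continuous_extension F)⟩,
    hasBishop_of_locallyConnectedSpace _, ?_⟩
  refine not_hasBishop_collapse (J := ℝ) _ _ _ hE
    (fun r => ultrafilterIndicator {q : ℚ | (q : ℝ) < r})
    (ultrafilterIndicator_injective.comp injective_rat_cuts)
    (fun r s hrs => ultrafilterIndicator_mono fun q hq => lt_of_lt_of_le hq hrs)
    fun r u => ?_
  exact indicator_eq_zero_or_self _ _ _
end
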